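/- (Morse's lemma with parameters and constant rank.) Let f ∈ C^∞(ℝ^d × ℝ^d) and let 0 ≤ n ≤ d. Suppose that for all t in a neighborhood of 0: f(0,t) = 0 and ∇_x f(0,t) = 0, and that the Hessian in x, Δ_x f(x,t), has rank exactly n for all (x,t) in a neighborhood of (0,0). Let m be the number of positive eigenvalues of Δ_x f(0,0). Then there exist neighborhoods V, W of 0 in ℝ^d and a smooth map τ : V × W → ℝ^d such that τ(0,t) = 0 for all t ∈ W, the Jacobian determinant det J_x τ(x,t) is nonzero for all (x,t) ∈ V × W, and f(x,t) = Q_{m,n}(τ(x,t)) for all (x,t) ∈ V × W. -/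

import Mathlib

open MeasureTheory Real Set

/-- The quadratic form `Q_{m,n}(y) = Σ_{j<m} y_j² − Σ_{m≤j<n} y_j²` on `ℝ^d`. -/
noncomputable def Qmn (d m n : ℕ) (y : EuclideanSpace ℝ (Fin d)) : ℝ :=
  ∑ j : Fin d, if (j : ℕ) < m then y j ^ 2 else if (j : ℕ) < n then -(y j ^ 2) else 0

/-- The Hessian matrix in the first variable of `f : ℝ^d × ℝ^d → ℝ`. -/
noncomputable def hessX (d : ℕ)
    (f : EuclideanSpace ℝ (Fin d) × EuclideanSpace ℝ (Fin d) → ℝ)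
    (x t : EuclideanSpace ℝ (Fin d)) : Matrix (Fin d) (Fin d) ℝ :=
  Matrix.of fun i j =>
    fderiv ℝ (fun x' => fderiv ℝ (fun x'' => f (x'', t)) x' (EuclideanSpace.single j 1)) x
      (EuclideanSpace.single i 1)

section morse_helpers
universe u
open Filter Topology

lemma morse_param_integral (n : ℕ) : ∀ {X Y : Type u} [NormedAddCommGroup X] [NormedSpace ℝ X]
    [FiniteDimensional ℝ X] [NormedAddCommGroup Y] [NormedSpace ℝ Y]
    (K : X → ℝ → Y), ContDiff ℝ n (fun p : X × ℝ => K p.1 p.2) →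
    ContDiff ℝ n (fun x => ∫ s in (0:ℝ)..1, K x s) := by
  induction n with
  | zero =>
    intro X Y _ _ _ _ _ K hK
    have hK' : Continuous (Function.uncurry K) := by
      exact hK.continuous
    simp only [Nat.cast_zero, contDiff_zero]
    exact intervalIntegral.continuous_parametric_intervalIntegral_of_continuous' hK' 0 1
  | succ n ih =>
    intro X Y _ _ _ _ _ K hK
    have : ProperSpace X := FiniteDimensional.proper ℝ X
    set K' : X → ℝ → (X →L[ℝ] Y) := fun x s =>
      (fderiv ℝ (fun p : X × ℝ => K p.1 p.2) (x, s)).comp (ContinuousLinearMap.inl ℝ X ℝ) with hK'def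
    have hK's : ContDiff ℝ n (fun p : X × ℝ => K' p.1 p.2) := by
      have h1 : ContDiff ℝ n (fderiv ℝ (fun p : X × ℝ => K p.1 p.2)) :=
        hK.fderiv_right (by norm_cast)
      exact h1.clm_comp contDiff_const
    have hK'c : Continuous (fun p : X × ℝ => K' p.1 p.2) := hK's.continuous
    have hKc : Continuous (fun p : X × ℝ => K p.1 p.2) := hK.continuous
    have hd : ∀ x s, HasFDerivAt (fun x => K x s) (K' x s) x := by
      intro x s
      have h1 : HasFDerivAt (fun p : X × ℝ => K p.1 p.2) _ (x, s) :=
        (hK.differentiable (by norm_cast) (x, s)).hasFDerivAt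
      exact HasFDerivAt.comp (g := fun p : X × ℝ => K p.1 p.2) x h1 (hasFDerivAt_prodMk_left (𝕜 := ℝ) x s)
    push_cast
    rw [contDiff_succ_iff_hasFDerivAt]
    refine ⟨fun x => ∫ s in (0:ℝ)..1, K' x s, ih K' hK's, fun x₀ => ?_⟩
    obtain ⟨C, hC⟩ := ((isCompact_closedBall x₀ 1).prod (isCompact_Icc (a := (0:ℝ)) (b := 1))).exists_bound_of_continuousOn hK'c.continuousOn
    refine intervalIntegral.hasFDerivAt_integral_of_dominated_of_fderiv_le
      (s := Metric.closedBall x₀ 1) (bound := fun _ => C) (Metric.closedBall_mem_nhds _ one_pos)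
      ?_ ?_ ?_ ?_ ?_ ?_
    · refine Eventually.of_forall fun x => ?_
      exact (hKc.comp (Continuous.prodMk_right x)).aestronglyMeasurable
    · exact (hKc.comp (Continuous.prodMk_right x₀)).intervalIntegrable _ _
    · exact (hK'c.comp (Continuous.prodMk_right x₀)).aestronglyMeasurable
    · refine Eventually.of_forall fun s hs x hx => hC (x, s) ⟨hx, ?_⟩
      rw [Set.uIoc_of_le zero_le_one] at hs
      exact ⟨hs.1.le, hs.2⟩
    · exact continuous_const.intervalIntegrable _ _
    · exact Eventually.of_forall fun s hs x hx => hd x s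

lemma morse_inverse {X : Type*} [NormedAddCommGroup X] [NormedSpace ℝ X] [CompleteSpace X]
    (Ψ : X → X) (hΨ : ContDiff ℝ (⊤ : ℕ∞) Ψ) (a : X) (hu : IsUnit (fderiv ℝ Ψ a)) :
    ∃ g : X → X, g (Ψ a) = a ∧ (∀ᶠ y in 𝓝 (Ψ a), ContDiffAt ℝ (⊤ : ℕ∞) g y) ∧
      (∀ᶠ y in 𝓝 (Ψ a), Ψ (g y) = y) ∧ (∀ᶠ x in 𝓝 a, g (Ψ x) = x) := by
  have key : ∀ x, IsUnit (fderiv ℝ Ψ x) → ∃ L : X ≃L[ℝ] X, HasFDerivAt Ψ (L : X →L[ℝ] X) x := by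
    rintro x ⟨U, hU⟩
    refine ⟨ContinuousLinearEquiv.unitsEquiv ℝ X U, ?_⟩
    have := (hΨ.differentiable (by simp) x).hasFDerivAt
    rw [← hU] at this
    exact this
  obtain ⟨L, hL⟩ := key a hu
  have h1 : ContDiffAt ℝ (⊤ : ℕ∞) Ψ a := hΨ.contDiffAt
  set e := h1.toOpenPartialHomeomorph Ψ hL (by simp) with he
  have hec : (e : X → X) = Ψ := h1.toOpenPartialHomeomorph_coe hL (by simp)
  have hsrc : a ∈ e.source := h1.mem_toOpenPartialHomeomorph_source hL (by simp)
  have htgt : Ψ a ∈ e.target := by rw [← hec]; exact e.map_source hsrc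
  have hga : e.symm (Ψ a) = a := by rw [← hec]; exact e.left_inv hsrc
  have hcont : Continuous (fderiv ℝ Ψ) := hΨ.continuous_fderiv (by simp)
  refine ⟨e.symm, hga, ?_, ?_, ?_⟩
  · have h2 : ContinuousAt e.symm (Ψ a) := e.continuousAt_symm htgt
    have h3 : ∀ᶠ x in 𝓝 (e.symm (Ψ a)), IsUnit (fderiv ℝ Ψ x) := by
      rw [hga]
      exact hcont.continuousAt.eventually (Units.isOpen.mem_nhds hu)
    filter_upwards [h2.eventually h3, e.open_target.mem_nhds htgt] with y hy1 hy2
    obtain ⟨L', hL'⟩ := key _ hy1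
    refine e.contDiffAt_symm hy2 (f₀' := L') ?_ ?_
    · rw [hec]; exact hL'
    · rw [hec]; exact hΨ.contDiffAt
  · filter_upwards [e.open_target.mem_nhds htgt] with y hy
    rw [← hec]; exact e.right_inv hy
  · filter_upwards [e.open_source.mem_nhds hsrc] with y hy
    rw [← hec]; exact e.left_inv hy

lemma morse_sylvester {R : Type*} [NormedRing R] [NormedAlgebra ℝ R] (L M Z : R)
    (hL : ‖L - 1‖ < 1) (hM : ‖M - 1‖ < 1) (h : L * Z + Z * M = 0) : Z = 0 := by
  have h3 : ‖Z + Z‖ = 2 * ‖Z‖ := by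
    rw [← two_smul ℝ Z, norm_smul]; simp
  have h4 : Z + Z = - ((L - 1) * Z + Z * (M - 1)) := by
    have : (L - 1) * Z + Z * (M - 1) = (L * Z + Z * M) - (Z + Z) := by noncomm_ring
    rw [this, h]; simp
  have h5 : 2 * ‖Z‖ ≤ ‖L - 1‖ * ‖Z‖ + ‖Z‖ * ‖M - 1‖ := by
    rw [← h3, h4, norm_neg]
    exact (norm_add_le _ _).trans (add_le_add (norm_mul_le _ _) (norm_mul_le _ _))
  by_contra hZ
  have : 0 < ‖Z‖ := norm_pos_iff.2 hZ
  nlinarith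

lemma morse_sqrt {R : Type*} [NormedRing R] [NormedAlgebra ℝ R] [CompleteSpace R] :
    ∃ g : R → R, g 1 = 1 ∧ (∀ᶠ y in 𝓝 (1 : R), ContDiffAt ℝ (⊤ : ℕ∞) g y) ∧
      (∀ᶠ y in 𝓝 (1 : R), g y * g y = y) := by
  have hΨ : ContDiff ℝ (⊤ : ℕ∞) (fun x : R => x * x) := contDiff_id.mul contDiff_id
  have hder : fderiv ℝ (fun x : R => x * x) 1 = (2 : ℝ) • ContinuousLinearMap.id ℝ R := by
    have := ((hasFDerivAt_id (𝕜 := ℝ) (1 : R)).mul' (hasFDerivAt_id (𝕜 := ℝ) (1 : R))).fderiv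
    simp only [id] at this
    refine Eq.trans this ?_
    ext x
    simp [two_smul]
  obtain ⟨g, h1, h2, h3, -⟩ := morse_inverse (fun x : R => x * x) hΨ 1 (by
    rw [hder]
    refine ⟨⟨(2 : ℝ) • 1, (2⁻¹ : ℝ) • 1, ?_, ?_⟩, rfl⟩ <;> · ext x; simp [smul_smul])
  simp only [mul_one] at h1 h2 h3
  exact ⟨g, h1, h2, h3⟩

section morse_core
variable {E F : Type u} [NormedAddCommGroup E] [InnerProductSpace ℝ E] [FiniteDimensional ℝ E]
  [NormedAddCommGroup F] [NormedSpace ℝ F] [FiniteDimensional ℝ F]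

/-- Partial derivative of `G` in the first variable. -/
noncomputable def morseH (G : E × F → E) (p : E × F) : E →L[ℝ] E :=
  (fderiv ℝ G p).comp (ContinuousLinearMap.inl ℝ E F)

/-- Integral remainder. -/
noncomputable def morseN (G : E × F → E) (q : (E × F) × E) : E →L[ℝ] E :=
  ∫ s in (0:ℝ)..1, (1 - s) • morseH G (q.1 + s • (q.2, 0))

lemma morseH_smooth (G : E × F → E) (hGs : ContDiff ℝ (⊤ : ℕ∞) G) :
    ContDiff ℝ (⊤ : ℕ∞) (morseH G) := by
  have h1 : ContDiff ℝ (⊤ : ℕ∞) (fderiv ℝ G) := hGs.fderiv_right (by simp)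
  exact h1.clm_comp contDiff_const

lemma morse_integrand_smooth (G : E × F → E) (hGs : ContDiff ℝ (⊤ : ℕ∞) G) :
    ContDiff ℝ (⊤ : ℕ∞) (fun z : ((E × F) × E) × ℝ =>
      (1 - z.2) • morseH G (z.1.1 + z.2 • (z.1.2, 0))) := by
  have h := morseH_smooth G hGs
  have h2 : ContDiff ℝ (⊤ : ℕ∞) (fun z : ((E × F) × E) × ℝ => z.1.1 + z.2 • (z.1.2, (0 : F))) := by
    fun_prop
  exact (contDiff_const.sub contDiff_snd).smul (h.comp h2)

lemma morseN_smooth (G : E × F → E) (hGs : ContDiff ℝ (⊤ : ℕ∞) G) :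
    ContDiff ℝ (⊤ : ℕ∞) (morseN G) := by
  rw [contDiff_infty]
  intro n
  exact morse_param_integral n (fun (q : (E × F) × E) (s : ℝ) =>
    (1 - s) • morseH G (q.1 + s • (q.2, 0)))
    ((morse_integrand_smooth G hGs).of_le (by exact WithTop.coe_le_coe.2 le_top))

lemma morseN_apply (G : E × F → E) (hGs : ContDiff ℝ (⊤ : ℕ∞) G) (q : (E × F) × E) (u w : E) :
    inner ℝ (morseN G q u) w =
      ∫ s in (0:ℝ)..1, (1 - s) * inner ℝ (morseH G (q.1 + s • (q.2, 0)) u) w := by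
  have hc : Continuous (fun s : ℝ => (1 - s) • morseH G (q.1 + s • (q.2, 0))) :=
    (morse_integrand_smooth G hGs).continuous.comp (Continuous.prodMk_right q)
  have h := ContinuousLinearMap.intervalIntegral_comp_comm
    ((innerSL ℝ w).comp (ContinuousLinearMap.apply ℝ E u)) (hc.intervalIntegrable (μ := volume) 0 1)
  simp only [ContinuousLinearMap.comp_apply, ContinuousLinearMap.apply_apply, innerSL_apply_apply] at h
  rw [morseN, real_inner_comm, ← h]
  congr 1
  ext s
  simp [inner_smul_right, real_inner_comm w]

lemma morseH_symm (f : E × F → ℝ) (hf : ContDiff ℝ (⊤ : ℕ∞) f) (G : E × F → E)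
    (hGs : ContDiff ℝ (⊤ : ℕ∞) G) (hG : ∀ p v, fderiv ℝ f p (v, 0) = inner ℝ (G p) v)
    (p : E × F) (u v : E) : inner ℝ (morseH G p u) v = inner ℝ u (morseH G p v) := by
  have key : ∀ u v, inner ℝ (morseH G p u) v = fderiv ℝ (fderiv ℝ f) p (u, 0) (v, 0) := by
    intro u v
    have h1 : HasFDerivAt (fun p => inner ℝ (G p) v) _ p :=
      (hGs.differentiable (by simp) p).hasFDerivAt.inner ℝ (hasFDerivAt_const v p)
    have hd : Differentiable ℝ (fderiv ℝ f) :=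
      (hf.fderiv_right (m := 1) (by norm_cast)).differentiable (by simp)
    have h2 : HasFDerivAt (fun p => fderiv ℝ f p (v, 0)) _ p :=
      (hd p).hasFDerivAt.clm_apply (hasFDerivAt_const (v, (0 : F)) p)
    simp only [hG] at h2
    have h3 := DFunLike.congr_fun (h1.unique h2) (u, 0)
    simpa [morseH] using h3
  have hs : IsSymmSndFDerivAt ℝ f p := hf.contDiffAt.isSymmSndFDerivAt (by
    rw [minSmoothness_of_isRCLikeNormedField]; exact WithTop.coe_le_coe.2 le_top)
  rw [key, real_inner_comm, key, hs.eq]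

lemma morseN_symm (f : E × F → ℝ) (hf : ContDiff ℝ (⊤ : ℕ∞) f) (G : E × F → E)
    (hGs : ContDiff ℝ (⊤ : ℕ∞) G) (hG : ∀ p v, fderiv ℝ f p (v, 0) = inner ℝ (G p) v)
    (q : (E × F) × E) (u v : E) : inner ℝ (morseN G q u) v = inner ℝ u (morseN G q v) := by
  rw [morseN_apply G hGs, real_inner_comm, morseN_apply G hGs]
  congr 1
  ext s
  rw [morseH_symm f hf G hGs hG, real_inner_comm]

lemma morse_taylor (f : E × F → ℝ) (hf : ContDiff ℝ (⊤ : ℕ∞) f) (G : E × F → E)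
    (hGs : ContDiff ℝ (⊤ : ℕ∞) G) (hG : ∀ p v, fderiv ℝ f p (v, 0) = inner ℝ (G p) v)
    (p : E × F) (v : E) :
    f (p + (v, 0)) = f p + inner ℝ (G p) v + inner ℝ (morseN G (p, v) v) v := by
  have hline : ∀ s : ℝ, HasDerivAt (fun s : ℝ => p + s • (v, (0 : F))) (v, 0) s := by
    intro s
    simpa using ((hasDerivAt_id s).smul_const (v, (0 : F))).const_add p
  have h1 : ∀ s : ℝ, HasDerivAt (fun s : ℝ => f (p + s • (v, (0 : F))))
      (inner ℝ (G (p + s • (v, (0 : F)))) v) s := by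
    intro s
    rw [← hG]
    exact (hf.differentiable (by simp) _).hasFDerivAt.comp_hasDerivAt s (hline s)
  have h2 : ∀ s : ℝ, HasDerivAt (fun s : ℝ => inner ℝ (G (p + s • (v, (0 : F)))) v)
      (inner ℝ (morseH G (p + s • (v, (0 : F))) v) v) s := by
    intro s
    have := ((hGs.differentiable (by simp) _).hasFDerivAt.comp_hasDerivAt s (hline s)).inner ℝ
      (hasDerivAt_const s v)
    simpa [morseH] using this
  have h3 : ∀ s : ℝ, HasDerivAt (fun s : ℝ => (1 - s) * inner ℝ (G (p + s • (v, (0 : F)))) v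
      + f (p + s • (v, (0 : F)))) ((1 - s) * inner ℝ (morseH G (p + s • (v, (0 : F))) v) v) s := by
    intro s
    have := (((hasDerivAt_id s).const_sub 1).mul (h2 s)).add (h1 s)
    convert! this using 1
    simp
  rw [morseN_apply G hGs, intervalIntegral.integral_eq_sub_of_hasDerivAt (fun s _ => h3 s)]
  · simp
    ring
  · have hc : Continuous (fun s : ℝ => (1 - s) • morseH G (p + s • (v, 0))) :=
      (morse_integrand_smooth G hGs).continuous.comp (Continuous.prodMk_right (p, v))
    have : Continuous (fun s : ℝ => inner ℝ (((1 - s) • morseH G (p + s • (v, (0 : F)))) v) v) :=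
      (hc.clm_apply continuous_const).inner continuous_const
    simp only [_root_.smul_apply, inner_smul_left] at this
    exact this.intervalIntegrable _ _


lemma morse_rank (n : ℕ) (P K : E →L[ℝ] E) (hPP : ∀ u, P (P u) = P u)
    (hP : Module.finrank ℝ (LinearMap.range (P : E →ₗ[ℝ] E)) = n)
    (hK : Module.finrank ℝ (LinearMap.range (K : E →ₗ[ℝ] E)) = n)
    (hu : IsUnit (P * K + (1 - P))) (w : E) (hw : P (K w) = 0) : K w = 0 := by
  let T : LinearMap.range (K : E →ₗ[ℝ] E) →ₗ[ℝ] LinearMap.range (P : E →ₗ[ℝ] E) :=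
    (LinearMap.rangeRestrict (P : E →ₗ[ℝ] E)).comp (Submodule.subtype _)
  have hsurj : Function.Surjective T := by
    rintro ⟨u, z, hz⟩
    obtain ⟨U, hU⟩ := hu
    have h1 : (P * K + (1 - P)) ((U⁻¹ : (E →L[ℝ] E)ˣ).1 u) = u := by
      rw [← hU, ← mul_apply_eq_comp, Units.mul_inv]; rfl
    set y := (U⁻¹ : (E →L[ℝ] E)ˣ).1 u
    refine ⟨⟨K y, y, rfl⟩, ?_⟩
    have h2 := congrArg P h1
    have hPu : P u = u := by rw [← hz]; exact hPP z
    simp [hPP, hPu] at h2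
    exact Subtype.ext h2
  have hinj : Function.Injective T :=
    (LinearMap.injective_iff_surjective_of_finrank_eq_finrank (hK.trans hP.symm)).2 hsurj
  have h3 : T ⟨K w, w, rfl⟩ = 0 := Subtype.ext hw
  have h4 : (⟨K w, w, rfl⟩ : LinearMap.range (K : E →ₗ[ℝ] E)) = 0 := hinj (h3.trans (map_zero T).symm)
  exact congrArg Subtype.val h4

lemma morse_isUnit (K : E →L[ℝ] E) (h : ∀ w, K w = 0 → w = 0) : IsUnit K := by
  have hinj : Function.Injective (K : E →ₗ[ℝ] E) := (injective_iff_map_eq_zero _).2 h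
  let e := (LinearEquiv.ofInjectiveEndo (K : E →ₗ[ℝ] E) hinj).toContinuousLinearEquiv
  refine ⟨(ContinuousLinearEquiv.unitsEquiv ℝ E).symm e, ?_⟩
  ext x
  rfl

lemma morse_isUnit' {X : Type*} [NormedAddCommGroup X] [NormedSpace ℝ X] [FiniteDimensional ℝ X]
    (K : X →L[ℝ] X) (h : ∀ w, K w = 0 → w = 0) : IsUnit K := by
  have hinj : Function.Injective (K : X →ₗ[ℝ] X) := (injective_iff_map_eq_zero _).2 h
  let e := (LinearEquiv.ofInjectiveEndo (K : X →ₗ[ℝ] X) hinj).toContinuousLinearEquiv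
  refine ⟨(ContinuousLinearEquiv.unitsEquiv ℝ X).symm e, ?_⟩
  ext x
  rfl

lemma morse_retract (f : E × F → ℝ) (hf : ContDiff ℝ (⊤ : ℕ∞) f) (G : E × F → E)
    (hGs : ContDiff ℝ (⊤ : ℕ∞) G) (hG : ∀ p v, fderiv ℝ f p (v, 0) = inner ℝ (G p) v)
    (n : ℕ) (h0 : ∀ᶠ t in 𝓝 (0 : F), f (0, t) = 0) (hg : ∀ᶠ t in 𝓝 (0 : F), G (0, t) = 0)
    (hr : ∀ᶠ p in 𝓝 (0 : E × F),
      Module.finrank ℝ (LinearMap.range (morseH G p : E →ₗ[ℝ] E)) = n)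
    (P : E →L[ℝ] E) (hPP : ∀ u, P (P u) = P u)
    (hPr : Module.finrank ℝ (LinearMap.range (P : E →ₗ[ℝ] E)) = n)
    (hPH : ∀ u, P (morseH G 0 u) = morseH G 0 u)
    (hker : ∀ u, morseH G 0 u = 0 → P u = 0) :
    ∃ r : E × F → E, (∀ᶠ p in 𝓝 (0 : E × F), ContDiffAt ℝ (⊤ : ℕ∞) r p) ∧
      (∀ᶠ t in 𝓝 (0 : F), r (0, t) = 0) ∧
      (∀ᶠ p in 𝓝 (0 : E × F), f (r p, p.2) = 0 ∧ G (r p, p.2) = 0 ∧ P (p.1 - r p) = p.1 - r p) ∧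
      (∀ w, fderiv ℝ r 0 (w, 0) = w - P w) := by
  have hGd : ∀ p, HasFDerivAt G (fderiv ℝ G p) p := fun p =>
    (hGs.differentiable (by simp) p).hasFDerivAt
  -- the local diffeomorphism
  let Ψ : E × F → E × F := fun p => (P (G p) + (p.1 - P p.1), p.2)
  have hΨs : ContDiff ℝ (⊤ : ℕ∞) Ψ := by
    have h1 : ContDiff ℝ (⊤ : ℕ∞) (fun p => P (G p)) := P.contDiff.comp hGs
    have h2 : ContDiff ℝ (⊤ : ℕ∞) (fun p : E × F => P p.1) := P.contDiff.comp contDiff_fst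
    exact (h1.add (contDiff_fst.sub h2)).prodMk contDiff_snd
  have hΨd : fderiv ℝ Ψ 0 = ((P.comp (fderiv ℝ G 0)) + (ContinuousLinearMap.fst ℝ E F -
      P.comp (ContinuousLinearMap.fst ℝ E F))).prod (ContinuousLinearMap.snd ℝ E F) := by
    apply HasFDerivAt.fderiv
    refine HasFDerivAt.prodMk (HasFDerivAt.add ?_ (HasFDerivAt.sub hasFDerivAt_fst ?_)) hasFDerivAt_snd
    · exact P.hasFDerivAt.comp 0 (hGd 0)
    · exact P.hasFDerivAt.comp 0 hasFDerivAt_fst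
  have hunit0 : ∀ w, P (morseH G 0 w) + (w - P w) = 0 → w = 0 := by
    intro w hw
    have h1 := congrArg P hw
    simp [hPP, hPH] at h1
    rw [hPH, h1, hker w h1] at hw
    simpa using hw
  have hΨu : IsUnit (fderiv ℝ Ψ 0) := by
    apply morse_isUnit'
    rintro ⟨x, t⟩ hxt
    rw [hΨd] at hxt
    simp only [ContinuousLinearMap.prod_apply, Prod.mk_eq_zero] at hxt
    obtain ⟨h1, h2⟩ := hxt
    obtain rfl : t = 0 := h2
    have : x = 0 := hunit0 x h1
    simp [this]
  have hG0 : G 0 = 0 := hg.self_of_nhds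
  have hΨ0 : Ψ 0 = 0 := by simp [Ψ, hG0]
  obtain ⟨g, hg0, hgs, hgr, hgl⟩ := morse_inverse Ψ hΨs 0 hΨu
  rw [hΨ0] at hg0 hgs hgr
  let ι : E × F → E × F := fun p => (p.1 - P p.1, p.2)
  have hιs : ContDiff ℝ (⊤ : ℕ∞) ι := by
    have h2 : ContDiff ℝ (⊤ : ℕ∞) (fun p : E × F => P p.1) := P.contDiff.comp contDiff_fst
    exact (contDiff_fst.sub h2).prodMk contDiff_snd
  have hι0 : ι 0 = 0 := by simp [ι]
  have hιt : Tendsto ι (𝓝 0) (𝓝 0) := by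
    have := hιs.continuous.tendsto 0
    rwa [hι0] at this
  let r : E × F → E := fun p => (g (ι p)).1
  have hrs : ∀ᶠ p in 𝓝 (0 : E × F), ContDiffAt ℝ (⊤ : ℕ∞) r p := by
    filter_upwards [hιt.eventually hgs] with p hp
    exact contDiffAt_fst.comp p (hp.comp p hιs.contDiffAt)
  have hr0 : r 0 = 0 := by simp [r, hι0, hg0]
  have hrid : ∀ᶠ p in 𝓝 (0 : E × F), P (G (r p, p.2)) = 0 ∧ P (p.1 - r p) = p.1 - r p := by
    filter_upwards [hιt.eventually hgr] with p hp
    have h2 : (Ψ (g (ι p))).2 = (ι p).2 := congrArg Prod.snd hp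
    have h1 : P (G (g (ι p))) + ((g (ι p)).1 - P (g (ι p)).1) = p.1 - P p.1 := congrArg Prod.fst hp
    have h3 : g (ι p) = (r p, p.2) := Prod.ext rfl h2
    rw [h3] at h1
    simp only at h1
    have h4 := congrArg P h1
    simp [hPP] at h4
    refine ⟨h4, ?_⟩
    rw [h4, zero_add] at h1
    rw [map_sub]
    rw [sub_eq_sub_iff_sub_eq_sub] at h1
    rw [← neg_sub (r p), h1, neg_sub]
  have hr0t : ∀ᶠ t in 𝓝 (0 : F), r (0, t) = 0 := by
    have hc : Tendsto (fun t : F => ((0 : E), t)) (𝓝 0) (𝓝 0) :=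
      (Continuous.prodMk_right (0 : E)).tendsto 0
    filter_upwards [hc.eventually hgl, hg] with t ht1 ht2
    have : ι (0, t) = Ψ (0, t) := by simp [ι, Ψ, ht2]
    simp only [r, this, ht1]
  -- eventually the x-derivative of `G (r, t)` vanishes
  have hrc : Tendsto (fun p : E × F => (r p, p.2)) (𝓝 0) (𝓝 0) := by
    have h1 : ContinuousAt (fun p : E × F => (r p, p.2)) 0 :=
      hrs.self_of_nhds.continuousAt.prodMk continuousAt_snd
    have := h1.tendsto
    simp only [hr0] at this
    exact this
  have hHu : ∀ᶠ p in 𝓝 (0 : E × F), IsUnit (P * morseH G p + (1 - P)) := by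
    have hc : Continuous (fun p => P * morseH G p + (1 - P)) :=
      (continuous_const.mul (morseH_smooth G hGs).continuous).add continuous_const
    exact hc.continuousAt.eventually (Units.isOpen.mem_nhds (morse_isUnit' _ hunit0))
  have hder : ∀ᶠ p in 𝓝 (0 : E × F), HasFDerivAt (fun x => r (x, p.2))
        ((fderiv ℝ r p).comp (ContinuousLinearMap.inl ℝ E F)) p.1 ∧
      HasFDerivAt (fun x => G (r (x, p.2), p.2)) ((morseH G (r p, p.2)).comp
        ((fderiv ℝ r p).comp (ContinuousLinearMap.inl ℝ E F))) p.1 ∧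
      (∀ w, morseH G (r p, p.2) (fderiv ℝ r p (w, 0)) = 0) ∧
      (∀ w, P (w - fderiv ℝ r p (w, 0)) = w - fderiv ℝ r p (w, 0)) := by
    filter_upwards [hrs, hrid.eventually_nhds, hrc.eventually hHu, hrc.eventually hr]
      with p hp1 hp2 hp3 hp4
    have d1 : HasFDerivAt (fun x => r (x, p.2))
        ((fderiv ℝ r p).comp (ContinuousLinearMap.inl ℝ E F)) p.1 := by
      have h1 : HasFDerivAt r (fderiv ℝ r p) (p.1, p.2) :=
        (hp1.differentiableAt (by simp)).hasFDerivAt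
      exact HasFDerivAt.comp (g := r) p.1 h1 (hasFDerivAt_prodMk_left (𝕜 := ℝ) p.1 p.2)
    have d2 : HasFDerivAt (fun x => G (r (x, p.2), p.2)) ((morseH G (r p, p.2)).comp
        ((fderiv ℝ r p).comp (ContinuousLinearMap.inl ℝ E F))) p.1 :=
      HasFDerivAt.comp (g := fun y => G (y, p.2)) (g' := morseH G (r p, p.2)) p.1
        (HasFDerivAt.comp (g := G) (r p) (hGd (r p, p.2))
          (hasFDerivAt_prodMk_left (𝕜 := ℝ) (r p) p.2)) d1
    have hev : ∀ᶠ x in 𝓝 p.1, P (G (r (x, p.2), p.2)) = 0 ∧ P (x - r (x, p.2)) = x - r (x, p.2) :=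
      ((Continuous.prodMk_left p.2).tendsto p.1).eventually hp2
    have d3 := (P.hasFDerivAt.comp p.1 d2).congr_of_eventuallyEq
      (f₁ := fun _ => (0 : E)) (by filter_upwards [hev] with x hx; exact hx.1.symm)
    have d4 := d3.unique (hasFDerivAt_const (0 : E) p.1)
    have d5 := (hasFDerivAt_id p.1).sub d1
    have d6 := ((P.hasFDerivAt.comp p.1 d5).congr_of_eventuallyEq
      (f₁ := fun x => x - r (x, p.2)) (by filter_upwards [hev] with x hx; exact hx.2.symm)).unique d5
    refine ⟨d1, d2, fun w => ?_, fun w => ?_⟩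
    · exact morse_rank n P _ hPP hPr hp4 hp3 _ (DFunLike.congr_fun d4 w)
    · exact DFunLike.congr_fun d6 w
  refine ⟨r, hrs, hr0t, ?_, ?_⟩
  · obtain ⟨ε, hε, hball⟩ := Metric.eventually_nhds_iff_ball.1 hder
    have hsnd : Tendsto (fun p : E × F => p.2) (𝓝 0) (𝓝 0) := continuous_snd.tendsto 0
    filter_upwards [Metric.ball_mem_nhds (0 : E × F) hε, hrid, hsnd.eventually hr0t,
      hsnd.eventually h0, hsnd.eventually hg] with p hp hp2 hp3 hp4 hp5
    have hmem : ∀ x ∈ Metric.ball (0 : E) ε, (x, p.2) ∈ Metric.ball (0 : E × F) ε := by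
      intro x hx
      simp only [mem_ball_zero_iff, Prod.norm_def, max_lt_iff] at hx hp ⊢
      exact ⟨hx, hp.2⟩
    have hp1 : p.1 ∈ Metric.ball (0 : E) ε := by
      simp only [mem_ball_zero_iff, Prod.norm_def, max_lt_iff] at hp ⊢
      exact hp.1
    have hz : (0 : E) ∈ Metric.ball (0 : E) ε := Metric.mem_ball_self hε
    have hpre : IsPreconnected (Metric.ball (0 : E) ε) := (convex_ball _ _).isPreconnected
    have hGz : ∀ x ∈ Metric.ball (0 : E) ε, G (r (x, p.2), p.2) = 0 := by
      intro x hx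
      have hd : ∀ x ∈ Metric.ball (0 : E) ε, HasFDerivAt (fun x => G (r (x, p.2), p.2)) (0 : E →L[ℝ] E) x := by
        intro x hx
        obtain ⟨-, h2, h3, -⟩ := hball _ (hmem x hx)
        convert! h2 using 1
        ext w
        exact (h3 w).symm
      have := Metric.isOpen_ball.is_const_of_fderiv_eq_zero hpre
        (fun x hx => (hd x hx).differentiableAt.differentiableWithinAt) (fun x hx => (hd x hx).fderiv) hx hz
      rw [this, hp3, hp5]
    have hfz : ∀ x ∈ Metric.ball (0 : E) ε, f (r (x, p.2), p.2) = 0 := by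
      intro x hx
      have hd : ∀ x ∈ Metric.ball (0 : E) ε, HasFDerivAt (fun x => f (r (x, p.2), p.2)) (0 : E →L[ℝ] ℝ) x := by
        intro x hx
        obtain ⟨h1, -, -, -⟩ := hball _ (hmem x hx)
        have hfd : HasFDerivAt f (fderiv ℝ f (r (x, p.2), p.2)) (r (x, p.2), p.2) :=
          (hf.differentiable (by simp) _).hasFDerivAt
        have h2 := HasFDerivAt.comp (g := fun y => f (y, p.2)) (f := fun x => r (x, p.2)) x
          (HasFDerivAt.comp (g := f) (r (x, p.2)) hfd
            (hasFDerivAt_prodMk_left (𝕜 := ℝ) (r (x, p.2)) p.2)) h1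
        convert! h2 using 1
        ext w
        simp [hG, hGz x hx]
      have := Metric.isOpen_ball.is_const_of_fderiv_eq_zero hpre
        (fun x hx => (hd x hx).differentiableAt.differentiableWithinAt) (fun x hx => (hd x hx).fderiv) hx hz
      rw [this, hp3, hp4]
    exact ⟨hfz _ hp1, hGz _ hp1, hp2.2⟩
  · intro w
    obtain ⟨-, -, h3, h4⟩ := hder.self_of_nhds
    have h5 := h3 w
    have h6 := h4 w
    have h7 : ((r 0, (0 : E × F).2) : E × F) = 0 := by simp [hr0]
    rw [h7] at h5
    have h8 := hker _ h5
    rw [map_sub, h8, sub_zero] at h6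
    rw [h6]; simp


lemma morse_contDiffAt_aux {X R : Type*} [NormedAddCommGroup X] [NormedSpace ℝ X] [NormedRing R]
    [NormedAlgebra ℝ R] (P C : R) (N : X → R) (p : X) (h : ContDiffAt ℝ (⊤ : ℕ∞) N p) :
    ContDiffAt ℝ (⊤ : ℕ∞) (fun p => P * ((2 : ℝ) • N p) * P + C) p :=
  ((contDiffAt_const.mul (h.const_smul (2 : ℝ))).mul contDiffAt_const).add contDiffAt_const

lemma morse_contDiffAt_aux' {X R : Type*} [NormedAddCommGroup X] [NormedSpace ℝ X] [NormedRing R]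
    [NormedAlgebra ℝ R] (V : R) (D : X → R) (p : X) (h : ContDiffAt ℝ (⊤ : ℕ∞) D p) :
    ContDiffAt ℝ (⊤ : ℕ∞) (fun p => V * D p) p :=
  contDiffAt_const.mul h

lemma morseN_zero (G : E × F → E) : morseN G 0 = (2⁻¹ : ℝ) • morseH G 0 := by
  have : (∫ s in (0:ℝ)..1, (1 - s)) = 2⁻¹ := by
    rw [intervalIntegral.integral_sub (by simp) (by simp)]
    simp only [intervalIntegral.integral_const, integral_id]
    norm_num
  simp only [morseN, Prod.fst_zero, Prod.snd_zero, Prod.mk_zero_zero, smul_zero, add_zero]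
  rw [intervalIntegral.integral_smul_const, this]

lemma morse_algebra {R : Type*} [NormedRing R] [NormedAlgebra ℝ R] [StarRing R] [NormedStarGroup R]
    (P D D0 V B : R) (hD : star D = D) (hD0 : star D0 = D0) (hV1 : V * D0 = 1) (hV2 : D0 * V = 1)
    (hDP : D * (1 - P) = 1 - P) (hPD : (1 - P) * D = 1 - P)
    (hDP0 : D0 * (1 - P) = 1 - P) (hPD0 : (1 - P) * D0 = 1 - P)
    (hB : ‖B - 1‖ < 1) (hBB : B * B = V * D) :
    D = star B * D0 * B ∧ P * B = B * P := by
  have hB' : ‖star B - 1‖ < 1 := by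
    have : star B - 1 = star (B - 1) := by simp
    rw [this, norm_star]; exact hB
  have hDX : D0 * (B * B) = D := by rw [hBB, ← mul_assoc, hV2, one_mul]
  have hstar : star B * star B * D0 = D := by
    have h := congrArg star hDX
    rwa [star_mul, star_mul, hD, hD0] at h
  have h1 : D0 * B - star B * D0 = 0 := by
    apply morse_sylvester (star B) B _ hB' hB
    have : star B * (D0 * B - star B * D0) + (D0 * B - star B * D0) * B
        = D0 * (B * B) - star B * star B * D0 := by noncomm_ring
    rw [this, hDX, hstar, sub_self]
  have hVP : V * (1 - P) = 1 - P := by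
    calc V * (1 - P) = V * (D0 * (1 - P)) := by rw [hDP0]
      _ = 1 - P := by rw [← mul_assoc, hV1, one_mul]
  have hPV : (1 - P) * V = 1 - P := by
    calc (1 - P) * V = ((1 - P) * D0) * V := by rw [hPD0]
      _ = 1 - P := by rw [mul_assoc, hV2, mul_one]
  have hX1 : (1 - P) * (B * B) = 1 - P := by rw [hBB, ← mul_assoc, hPV, hPD]
  have hX2 : (B * B) * (1 - P) = 1 - P := by rw [hBB, mul_assoc, hDP, hVP]
  have h2 : P * B - B * P = 0 := by
    apply morse_sylvester B B _ hB hB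
    have : B * (P * B - B * P) + (P * B - B * P) * B
        = (B * B) * (1 - P) - (1 - P) * (B * B) := by noncomm_ring
    rw [this, hX1, hX2, sub_self]
  refine ⟨?_, sub_eq_zero.1 h2⟩
  rw [← sub_eq_zero.1 h1, mul_assoc, hDX]

set_option maxHeartbeats 1000000 in
lemma morse_core (f : E × F → ℝ) (hf : ContDiff ℝ (⊤ : ℕ∞) f) (G : E × F → E)
    (hGs : ContDiff ℝ (⊤ : ℕ∞) G) (hG : ∀ p v, fderiv ℝ f p (v, 0) = inner ℝ (G p) v)
    (n : ℕ) (h0 : ∀ᶠ t in 𝓝 (0 : F), f (0, t) = 0) (hg : ∀ᶠ t in 𝓝 (0 : F), G (0, t) = 0)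
    (hr : ∀ᶠ p in 𝓝 (0 : E × F),
      Module.finrank ℝ (LinearMap.range (morseH G p : E →ₗ[ℝ] E)) = n) :
    ∃ τ : E × F → E, (∀ᶠ p in 𝓝 (0 : E × F), ContDiffAt ℝ (⊤ : ℕ∞) τ p) ∧
      (∀ᶠ t in 𝓝 (0 : F), τ (0, t) = 0) ∧
      (∀ᶠ p in 𝓝 (0 : E × F),
        IsUnit ((fderiv ℝ τ p).comp (ContinuousLinearMap.inl ℝ E F))) ∧
      (∀ᶠ p in 𝓝 (0 : E × F), f p = 2⁻¹ * inner ℝ (morseH G 0 (τ p)) (τ p)) := by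
  have hHs := morseH_symm f hf G hGs hG
  set H0 : E →L[ℝ] E := morseH G 0 with hH0
  let U : Submodule ℝ E := LinearMap.range (H0 : E →ₗ[ℝ] E)
  let P : E →L[ℝ] E := U.starProjection
  have hPmem : ∀ u, P u ∈ U := fun u => U.starProjection_apply_mem u
  have hPid : ∀ u ∈ U, P u = u := fun u hu => Submodule.starProjection_eq_self_iff.2 hu
  have hPP : ∀ u, P (P u) = P u := fun u => hPid _ (hPmem u)
  have hPH : ∀ u, P (H0 u) = H0 u := fun u => hPid _ ⟨u, rfl⟩
  have hPrange : LinearMap.range (P : E →ₗ[ℝ] E) = U := by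
    ext u
    constructor
    · rintro ⟨w, rfl⟩; exact hPmem w
    · intro hu; exact ⟨u, hPid u hu⟩
  have hPr : Module.finrank ℝ (LinearMap.range (P : E →ₗ[ℝ] E)) = n := by
    rw [hPrange]; exact hr.self_of_nhds
  have hPs : ∀ u v, inner ℝ (P u) v = inner ℝ u (P v) := fun u v =>
    Submodule.inner_starProjection_left_eq_right U u v
  have hker : ∀ u, H0 u = 0 → P u = 0 := by
    intro u hu
    obtain ⟨w, hw⟩ := hPmem u
    have hw' : H0 w = P u := hw
    rw [← inner_self_eq_zero (𝕜 := ℝ), hPs, hPP, ← hw', ← hHs, hu, inner_zero_left]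
  have hHP : ∀ u, H0 (P u) = H0 u := by
    intro u
    refine ext_inner_right ℝ fun v => ?_
    rw [hHs, hPs, hPH, hHs]
  obtain ⟨r, hrs, hrt, hrid, hrd⟩ := morse_retract f hf G hGs hG n h0 hg hr P hPP hPr hPH hker
  have hr0 : r 0 = 0 := hrt.self_of_nhds
  have sP : star P = P := ContinuousLinearMap.isSelfAdjoint_iff_isSymmetric.2 hPs
  have sH : star H0 = H0 := ContinuousLinearMap.isSelfAdjoint_iff_isSymmetric.2 (hHs 0)
  have mPP : P * P = P := by ext u; simp [hPP]
  have mPH : P * H0 = H0 := by ext u; simp [hPH]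
  have mHP : H0 * P = H0 := by ext u; simp [hHP]
  let N : E × F → (E →L[ℝ] E) := fun p => morseN G ((r p, p.2), p.1 - r p)
  let D : E × F → (E →L[ℝ] E) := fun p => P * ((2 : ℝ) • N p) * P + (1 - P)
  have sN : ∀ p, star (N p) = N p := fun p =>
    ContinuousLinearMap.isSelfAdjoint_iff_isSymmetric.2 (morseN_symm f hf G hGs hG _)
  have sD : ∀ p, star (D p) = D p := by
    intro p
    simp only [D, star_add, star_mul, star_sub, star_one, star_smul, sP, sN, mul_assoc]
    simp
  have hq : ∀ p, ContDiffAt ℝ (⊤ : ℕ∞) r p →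
      ContDiffAt ℝ (⊤ : ℕ∞) (fun p : E × F => ((r p, p.2), p.1 - r p)) p := fun p hp =>
    (hp.prodMk contDiffAt_snd).prodMk (contDiffAt_fst.sub hp)
  have hDs : ∀ p, ContDiffAt ℝ (⊤ : ℕ∞) r p → ContDiffAt ℝ (⊤ : ℕ∞) D p := by
    intro p hp
    have h1 : ContDiffAt ℝ (⊤ : ℕ∞) N p := 
      ContDiffAt.comp (g := morseN G) (f := fun p : E × F => ((r p, p.2), p.1 - r p)) p
        (morseN_smooth G hGs).contDiffAt (hq p hp)
    exact morse_contDiffAt_aux P (1 - P) N p h1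
  have hD0 : D 0 = H0 + (1 - P) := by
    have : N 0 = (2⁻¹ : ℝ) • H0 := by
      simp only [N, hr0]
      rw [hH0, ← morseN_zero]; simp
      rfl
    simp [D, this, mPH, mHP]
  have hDP : ∀ p, D p * (1 - P) = 1 - P := by
    intro p
    have h1 : P * (1 - P) = 0 := by rw [mul_sub, mPP, mul_one, sub_self]
    have h2 : (1 - P) * (1 - P) = 1 - P := by rw [sub_mul, h1, one_mul, sub_zero]
    simp only [D, add_mul, mul_assoc, h1, h2, mul_zero, zero_add]
  have hPD : ∀ p, (1 - P) * D p = 1 - P := by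
    intro p
    have h1 : (1 - P) * P = 0 := by rw [sub_mul, mPP, one_mul, sub_self]
    have h2 : (1 - P) * (1 - P) = 1 - P := by rw [mul_sub, h1, mul_one, sub_zero]
    simp only [D, mul_add, ← mul_assoc, h1, h2, zero_mul, zero_add]
  have hD0u : IsUnit (D 0) := by
    apply morse_isUnit'
    intro w hw
    rw [hD0] at hw
    have hw' : H0 w + (w - P w) = 0 := hw
    have h1 := congrArg P hw'
    simp [hPP, hPH] at h1
    rw [h1, hker w h1] at hw'
    simpa using hw'
  obtain ⟨DU, hDU⟩ := hD0u
  let V : E →L[ℝ] E := (DU⁻¹ : (E →L[ℝ] E)ˣ).1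
  have hV1 : V * D 0 = 1 := by rw [← hDU]; exact DU.inv_mul
  have hV2 : D 0 * V = 1 := by rw [← hDU]; exact DU.mul_inv
  obtain ⟨sq, sq1, sqs, sqq⟩ := morse_sqrt (R := E →L[ℝ] E)
  let B : E × F → (E →L[ℝ] E) := fun p => sq (V * D p)
  have hr00 : ContDiffAt ℝ (⊤ : ℕ∞) r 0 := hrs.self_of_nhds
  have hXs : ∀ p, ContDiffAt ℝ (⊤ : ℕ∞) r p → ContDiffAt ℝ (⊤ : ℕ∞) (fun p => V * D p) p :=
    fun p hp => morse_contDiffAt_aux' V D p (hDs p hp)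
  have hXt : Tendsto (fun p => V * D p) (𝓝 0) (𝓝 1) := by
    have := (hXs 0 hr00).continuousAt.tendsto
    rwa [hV1] at this
  have hBs : ∀ᶠ p in 𝓝 (0 : E × F), ContDiffAt ℝ (⊤ : ℕ∞) B p := by
    filter_upwards [hrs, hXt.eventually sqs] with p hp1 hp2
    exact hp2.comp p (hXs p hp1)
  have hB0 : B 0 = 1 := by simp only [B, hV1, sq1]
  have hBt : Tendsto B (𝓝 0) (𝓝 1) := by
    have := hBs.self_of_nhds.continuousAt.tendsto
    rwa [hB0] at this
  have hBn : ∀ᶠ p in 𝓝 (0 : E × F), ‖B p - 1‖ < 1 := by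
    filter_upwards [hBt.eventually (Metric.ball_mem_nhds (1 : E →L[ℝ] E) one_pos)] with p hp
    rwa [← dist_eq_norm]
  let τ : E × F → E := fun p => B p (p.1 - r p) + (p.1 - P p.1)
  have hPx : ContDiff ℝ (⊤ : ℕ∞) (fun p : E × F => P p.1) := P.contDiff.comp contDiff_fst
  have hτs : ∀ᶠ p in 𝓝 (0 : E × F), ContDiffAt ℝ (⊤ : ℕ∞) τ p := by
    filter_upwards [hrs, hBs] with p hp1 hp2
    exact (hp2.clm_apply (contDiffAt_fst.sub hp1)).add (contDiffAt_fst.sub hPx.contDiffAt)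
  refine ⟨τ, hτs, ?_, ?_, ?_⟩
  · filter_upwards [hrt] with t ht
    simp [τ, ht]
  · have hder : (fderiv ℝ τ 0).comp (ContinuousLinearMap.inl ℝ E F) = 1 := by
      have d1 : HasFDerivAt (fun p : E × F => p.1 - r p)
          (ContinuousLinearMap.fst ℝ E F - fderiv ℝ r 0) 0 :=
        hasFDerivAt_fst.sub (hr00.differentiableAt (by simp)).hasFDerivAt
      have d2 : HasFDerivAt B (fderiv ℝ B 0) 0 :=
        (hBs.self_of_nhds.differentiableAt (by simp)).hasFDerivAt
      have d3 : HasFDerivAt (fun p : E × F => P p.1) (P.comp (ContinuousLinearMap.fst ℝ E F)) 0 :=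
        P.hasFDerivAt.comp 0 hasFDerivAt_fst
      have d4 : HasFDerivAt τ _ 0 := (d2.clm_apply d1).add (hasFDerivAt_fst.sub d3)
      rw [d4.fderiv]
      ext w
      simp [hB0, hr0, hrd]
    have hc : ContinuousAt (fun p => (fderiv ℝ τ p).comp (ContinuousLinearMap.inl ℝ E F)) 0 := by
      have h1 : ContDiffAt ℝ 0 (fderiv ℝ τ) 0 := hτs.self_of_nhds.fderiv_right (by simp)
      exact h1.continuousAt.clm_comp continuousAt_const
    refine hc.eventually (Units.isOpen.mem_nhds ?_)
    change IsUnit ((fderiv ℝ τ 0).comp (ContinuousLinearMap.inl ℝ E F))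
    rw [hder]; exact isUnit_one
  · filter_upwards [hrid, hBn, hXt.eventually sqq] with p hp1 hp2 hp3
    obtain ⟨hf1, hG1, hv⟩ := hp1
    obtain ⟨hDB, hPB⟩ := morse_algebra P (D p) (D 0) V (B p) (sD p) (sD 0) hV1 hV2 (hDP p) (hPD p)
      (hDP 0) (hPD 0) hp2 hp3
    have ht := morse_taylor f hf G hGs hG (r p, p.2) (p.1 - r p)
    have hpp : ((r p, p.2) : E × F) + (p.1 - r p, 0) = p := by ext <;> simp
    rw [hpp, hf1, hG1, inner_zero_left, zero_add, zero_add] at ht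
    set v := p.1 - r p with hvdef
    have hBv : P (B p v) = B p v := by
      have := DFunLike.congr_fun hPB v
      simp only [mul_apply_eq_comp] at this
      rw [this, hv]
    have e1 : inner ℝ (D p v) v = 2 * inner ℝ (N p v) v := by
      have : D p v = P ((2 : ℝ) • N p v) := by simp [D, hv]
      rw [this, hPs, hv, inner_smul_left]; simp
    have e2 : inner ℝ (D p v) v = inner ℝ (H0 (B p v)) (B p v) := by
      have h1 : D p v = star (B p) (D 0 (B p v)) := by
        conv_lhs => rw [hDB]
        rfl
      have h2 : D 0 (B p v) = H0 (B p v) := by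
        rw [hD0]
        simp [hBv]
      rw [h1, h2, ContinuousLinearMap.star_eq_adjoint, ContinuousLinearMap.adjoint_inner_left]
    have e3 : H0 (τ p) = H0 (B p v) := by
      change H0 (B p v + (p.1 - P p.1)) = _
      have hz : H0 (p.1 - P p.1) = 0 := by rw [map_sub, hHP, sub_self]
      rw [map_add, hz, add_zero]
    have e4 : inner ℝ (H0 (τ p)) (τ p) = inner ℝ (H0 (B p v)) (B p v) := by
      rw [e3, hHs, e3, ← hHs]
    rw [e4, ← e2, e1, ht]
    simp [N, hvdef]

end morse_core

lemma morse_perm {d : ℕ} (k k' : Fin d → Fin 3)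
    (h0 : (Finset.univ.filter fun i => k i = 0).card = (Finset.univ.filter fun i => k' i = 0).card)
    (h2 : (Finset.univ.filter fun i => ¬ k i = 2).card
      = (Finset.univ.filter fun i => ¬ k' i = 2).card) :
    ∃ σ : Fin d ≃ Fin d, ∀ j, k' (σ j) = k j := by
  have split : ∀ k : Fin d → Fin 3, (Finset.univ.filter fun i => ¬ k i = 2).card =
      (Finset.univ.filter fun i => k i = 0).card + (Finset.univ.filter fun i => k i = 1).card := by
    intro k
    rw [← Finset.card_union_of_disjoint]
    · congr 1
      ext i
      simp only [Finset.mem_filter, Finset.mem_univ, true_and, Finset.mem_union]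
      generalize k i = a
      fin_cases a <;> simp
    · rw [Finset.disjoint_filter]
      intro i _ h; rw [h]; simp
  have tot : ∀ k : Fin d → Fin 3, (Finset.univ.filter fun i => k i = 2).card +
      (Finset.univ.filter fun i => ¬ k i = 2).card = (Finset.univ : Finset (Fin d)).card :=
    fun k => Finset.card_filter_add_card_filter_not _
  have hc : ∀ c, Fintype.card {j // k j = c} = Fintype.card {j // k' j = c} := by
    intro c
    rw [Fintype.card_subtype, Fintype.card_subtype]
    have a1 := split k
    have a2 := split k'
    have a3 := tot k
    have a4 := tot k'
    match c with
    | 0 => exact h0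
    | 1 => omega
    | 2 => omega
  exact ⟨Equiv.ofFiberEquiv fun c => Fintype.equivOfCardEq (hc c), fun j =>
    Equiv.ofFiberEquiv_map _ j⟩

lemma morse_perm' {d m n : ℕ} (hnd : n ≤ d) (lam : Fin d → ℝ)
    (hm : m = Fintype.card {i : Fin d // 0 < lam i})
    (hn : n = Fintype.card {i : Fin d // lam i ≠ 0}) :
    ∃ σ : Fin d ≃ Fin d, ∀ j : Fin d, ((j : ℕ) < m → 0 < lam (σ j)) ∧
      (¬ (j : ℕ) < m → (j : ℕ) < n → lam (σ j) < 0) ∧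
      (¬ (j : ℕ) < m → ¬ (j : ℕ) < n → lam (σ j) = 0) := by
  have hmn : m ≤ n := by
    rw [hm, hn]
    exact Fintype.card_subtype_mono _ _ fun i hi => ne_of_gt hi
  rw [Fintype.card_subtype] at hm hn
  obtain ⟨σ, hσ⟩ := morse_perm (fun j : Fin d => if (j : ℕ) < m then (0 : Fin 3) else
      if (j : ℕ) < n then 1 else 2)
    (fun i => if 0 < lam i then (0 : Fin 3) else if lam i ≠ 0 then 1 else 2) (by
      have e1 : ∀ j : Fin d, ((if (j : ℕ) < m then (0 : Fin 3) else
          if (j : ℕ) < n then 1 else 2) = 0) ↔ (j : ℕ) < m := by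
        intro j; split_ifs <;> simp_all
      have e2 : ∀ i, ((if 0 < lam i then (0 : Fin 3) else if lam i ≠ 0 then 1 else 2) = 0)
          ↔ 0 < lam i := by
        intro j; split_ifs <;> simp_all
      simp only [e1, e2]
      rw [← hm, Fin.card_filter_val_lt, min_eq_right (hmn.trans hnd)]) (by
      have e1 : ∀ j : Fin d, (¬ (if (j : ℕ) < m then (0 : Fin 3) else
          if (j : ℕ) < n then 1 else 2) = 2) ↔ (j : ℕ) < n := by
        intro j; split_ifs with h1 h2
        · simp; omega
        · simpa using h2
        · simpa using h2
      have e2 : ∀ i, (¬ (if 0 < lam i then (0 : Fin 3) else if lam i ≠ 0 then 1 else 2) = 2)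
          ↔ lam i ≠ 0 := by
        intro j; split_ifs with h1 h2
        · simp [h1.ne']
        · simpa using h2
        · simpa using h2
      simp only [e1, e2]
      rw [← hn, Fin.card_filter_val_lt, min_eq_right hnd])
  refine ⟨σ, fun j => ?_⟩
  have h := hσ j
  refine ⟨fun h1 => ?_, fun h1 h2 => ?_, fun h1 h2 => ?_⟩
  · simp only [h1, if_true] at h
    by_contra h3
    rw [if_neg h3] at h
    split_ifs at h <;> simp_all
  · simp only [h1, h2, if_true, if_false] at h
    split_ifs at h with h3 h4
    · exact absurd h (by simp)
    · exact lt_of_le_of_ne (not_lt.1 h3) h4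
    · exact absurd h (by simp)
  · simp only [h1, h2, if_false] at h
    split_ifs at h with h3 h4
    · exact absurd h (by simp)
    · exact absurd h (by simp)
    · exact not_not.1 h4

lemma morse_diag {d m n : ℕ} (hnd : n ≤ d) (lam : Fin d → ℝ)
    (hm : m = Fintype.card {i : Fin d // 0 < lam i})
    (hn : n = Fintype.card {i : Fin d // lam i ≠ 0})
    (b : OrthonormalBasis (Fin d) ℝ (EuclideanSpace ℝ (Fin d)))
    (K : EuclideanSpace ℝ (Fin d) →L[ℝ] EuclideanSpace ℝ (Fin d))
    (hs : ∀ u v, inner ℝ (K u) v = inner ℝ u (K v)) (hK : ∀ i, K (b i) = lam i • b i) :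
    ∃ S : EuclideanSpace ℝ (Fin d) →L[ℝ] EuclideanSpace ℝ (Fin d), IsUnit S ∧
      ∀ y, Qmn d m n (S y) = 2⁻¹ * inner ℝ (K y) y := by
  obtain ⟨σ, hσ⟩ := morse_perm' hnd lam hm hn
  let c : Fin d → ℝ := fun i => if lam i = 0 then 1 else √(|lam i| / 2)
  have hc : ∀ i, c i ≠ 0 := by
    intro i
    by_cases h : lam i = 0
    · simp [c, h]
    · simp only [c, h, if_false]
      exact (Real.sqrt_pos.2 (by positivity)).ne'
  have hc2 : ∀ i, lam i ≠ 0 → c i ^ 2 = |lam i| / 2 := by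
    intro i h
    simp only [c, h, if_false]
    exact Real.sq_sqrt (by positivity)
  let S : EuclideanSpace ℝ (Fin d) →L[ℝ] EuclideanSpace ℝ (Fin d) :=
    ((EuclideanSpace.equiv (Fin d) ℝ).symm : (Fin d → ℝ) →L[ℝ] EuclideanSpace ℝ (Fin d)).comp
      (ContinuousLinearMap.pi fun j => c (σ j) • innerSL ℝ (b (σ j)))
  have hS : ∀ y j, S y j = c (σ j) * inner ℝ (b (σ j)) y := by
    intro y j
    simp [S]
  refine ⟨S, ?_, fun y => ?_⟩
  · apply morse_isUnit'
    intro w hw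
    have h1 : ∀ i, inner ℝ (b i) w = 0 := by
      intro i
      have := hS w (σ.symm i)
      rw [hw] at this
      simpa [hc] using this.symm
    rw [← b.sum_repr' w]
    simp [h1]
  · have h1 : inner ℝ (K y) y = ∑ i, lam i * inner ℝ (b i) y ^ 2 := by
      rw [← b.sum_inner_mul_inner]
      refine Finset.sum_congr rfl fun i _ => ?_
      rw [hs, hK, inner_smul_right, real_inner_comm]; ring
    rw [h1, ← Equiv.sum_comp σ, Finset.mul_sum, Qmn]
    refine Finset.sum_congr rfl fun j _ => ?_
    obtain ⟨g1, g2, g3⟩ := hσ j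
    rw [hS]
    split_ifs with i1 i2
    · have := g1 i1
      rw [mul_pow, hc2 _ this.ne', abs_of_pos this]; ring
    · have := g2 i1 i2
      rw [mul_pow, hc2 _ this.ne, abs_of_neg this]; ring
    · rw [g3 i1 i2]; ring

end morse_helpers

/-- Morse's lemma with parameters and constant rank: if `f(0,t) = 0`, `∇ₓf(0,t) = 0` for
`t` near `0` and the Hessian `Δₓf(x,t)` has rank exactly `n` near `(0,0)`, with `m`
positive eigenvalues at `(0,0)`, then near `0` there is a smooth change of variables `τ`
with `τ(0,t) = 0`, `det Jₓτ ≠ 0`, and `f(x,t) = Q_{m,n}(τ(x,t))`. -/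
theorem statement15 (d n : ℕ) (hnd : n ≤ d)
    (f : EuclideanSpace ℝ (Fin d) × EuclideanSpace ℝ (Fin d) → ℝ)
    (hf : ContDiff ℝ (⊤ : ℕ∞) f)
    (W₁ : Set (EuclideanSpace ℝ (Fin d))) (hW₁ : W₁ ∈ nhds (0 : EuclideanSpace ℝ (Fin d)))
    (hf0 : ∀ t ∈ W₁, f (0, t) = 0)
    (hgrad : ∀ t ∈ W₁, fderiv ℝ (fun x => f (x, t)) 0 = 0)
    (W₂ : Set (EuclideanSpace ℝ (Fin d) × EuclideanSpace ℝ (Fin d)))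
    (hW₂ : W₂ ∈ nhds ((0, 0) :
      EuclideanSpace ℝ (Fin d) × EuclideanSpace ℝ (Fin d)))
    (hrank : ∀ p ∈ W₂, (hessX d f p.1 p.2).rank = n)
    (hsymm : (hessX d f 0 0).IsHermitian)
    (m : ℕ) (hm : m = Fintype.card {i : Fin d // 0 < hsymm.eigenvalues i}) :
    ∃ V W : Set (EuclideanSpace ℝ (Fin d)), IsOpen V ∧ IsOpen W ∧
      (0 : EuclideanSpace ℝ (Fin d)) ∈ V ∧ (0 : EuclideanSpace ℝ (Fin d)) ∈ W ∧
      ∃ τ : EuclideanSpace ℝ (Fin d) × EuclideanSpace ℝ (Fin d) →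
          EuclideanSpace ℝ (Fin d),
        ContDiffOn ℝ (⊤ : ℕ∞) τ (V ×ˢ W) ∧
        (∀ t ∈ W, τ (0, t) = 0) ∧
        (∀ x ∈ V, ∀ t ∈ W,
          (Matrix.of fun i j : Fin d =>
            (fderiv ℝ (fun x' => τ (x', t)) x (EuclideanSpace.single j 1)) i).det ≠ 0) ∧
        (∀ x ∈ V, ∀ t ∈ W, f (x, t) = Qmn d m n (τ (x, t))) := by
  classical
  let E := EuclideanSpace ℝ (Fin d)
  let bE : Module.Basis (Fin d) ℝ (EuclideanSpace ℝ (Fin d)) :=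
    (EuclideanSpace.basisFun (Fin d) ℝ).toBasis
  have hbE : ∀ j, bE j = EuclideanSpace.single j 1 := by intro j; simp [bE]
  have htoM : ∀ (K : EuclideanSpace ℝ (Fin d) →L[ℝ] EuclideanSpace ℝ (Fin d)),
      LinearMap.toMatrix bE bE (K : EuclideanSpace ℝ (Fin d) →ₗ[ℝ] EuclideanSpace ℝ (Fin d)) =
        Matrix.of fun i j => (K (EuclideanSpace.single j 1)) i := by
    intro K
    ext i j
    rw [LinearMap.toMatrix_apply, hbE]
    simp [bE]
  let G : EuclideanSpace ℝ (Fin d) × EuclideanSpace ℝ (Fin d) → EuclideanSpace ℝ (Fin d) :=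
    fun p => WithLp.toLp 2 fun i => fderiv ℝ f p (EuclideanSpace.single i 1, 0)
  have hfd : ContDiff ℝ (⊤ : ℕ∞) (fderiv ℝ f) := hf.fderiv_right (by simp)
  have hGs : ContDiff ℝ (⊤ : ℕ∞) G := by
    rw [contDiff_euclidean]
    intro i
    exact hfd.clm_apply contDiff_const
  have hG : ∀ p v, fderiv ℝ f p (v, 0) = inner ℝ (G p) v := by
    intro p v
    have h1 : (fderiv ℝ f p).comp (ContinuousLinearMap.inl ℝ _ _) = innerSL ℝ (G p) := by
      apply ContinuousLinearMap.coe_injective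
      refine bE.ext fun i => ?_
      rw [hbE]
      simp [G, EuclideanSpace.inner_single_right]
    exact DFunLike.congr_fun h1 v
  have hpart : ∀ x t v, fderiv ℝ (fun x' => f (x', t)) x v = inner ℝ (G (x, t)) v := by
    intro x t v
    have h1 : HasFDerivAt f (fderiv ℝ f (x, t)) (x, t) :=
      (hf.differentiable (by simp) _).hasFDerivAt
    have h2 := HasFDerivAt.comp (g := f) x h1 (hasFDerivAt_prodMk_left (𝕜 := ℝ) x t)
    have h3 : fderiv ℝ (fun x' => f (x', t)) x = _ := h2.fderiv
    rw [h3, ← hG]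
    rfl
  have hsym := morseH_symm f hf G hGs hG
  have hhess : ∀ x t, hessX d f x t = LinearMap.toMatrix bE bE
      (morseH G (x, t) : EuclideanSpace ℝ (Fin d) →ₗ[ℝ] EuclideanSpace ℝ (Fin d)) := by
    intro x t
    rw [htoM]
    ext i j
    simp only [hessX, Matrix.of_apply, hpart]
    have h1 : HasFDerivAt G (fderiv ℝ G (x, t)) (x, t) :=
      (hGs.differentiable (by simp) _).hasFDerivAt
    have h2 : HasFDerivAt (fun x' => G (x', t)) (morseH G (x, t)) x :=
      HasFDerivAt.comp (g := G) x h1 (hasFDerivAt_prodMk_left (𝕜 := ℝ) x t)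
    have h3 := h2.inner ℝ (hasFDerivAt_const (EuclideanSpace.single j (1 : ℝ)) x)
    rw [h3.fderiv]
    have h4 : inner ℝ (morseH G (x, t) (EuclideanSpace.single i 1)) (EuclideanSpace.single j (1 : ℝ))
        = (morseH G (x, t) (EuclideanSpace.single j 1)) i := by
      rw [hsym]
      simp [EuclideanSpace.inner_single_left]
    simpa using h4
  have hrk : ∀ x t, (hessX d f x t).rank = Module.finrank ℝ (LinearMap.range
      (morseH G (x, t) : EuclideanSpace ℝ (Fin d) →ₗ[ℝ] EuclideanSpace ℝ (Fin d))) := by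
    intro x t
    rw [Matrix.rank_eq_finrank_range_toLin _ bE bE, hhess, Matrix.toLin_toMatrix]
  obtain ⟨τ, hτs, hτ0, hτu, hτf⟩ := morse_core f hf G hGs hG n
    (Filter.eventually_of_mem hW₁ hf0)
    (by
      filter_upwards [hW₁] with t ht
      refine ext_inner_right ℝ fun v => ?_
      rw [← hpart, hgrad t ht]; simp)
    (by
      filter_upwards [hW₂] with p hp
      rw [← hrank p hp, hrk])
  have hn : n = Fintype.card {i : Fin d // hsymm.eigenvalues i ≠ 0} := by
    rw [← hsymm.rank_eq_card_non_zero_eigs]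
    exact (hrank (0, 0) (mem_of_mem_nhds hW₂)).symm
  obtain ⟨S, hSu, hSQ⟩ := morse_diag hnd hsymm.eigenvalues hm hn hsymm.eigenvectorBasis
    (morseH G 0) (hsym 0) (by
      intro i
      have h1 := hsymm.mulVec_eigenvectorBasis i
      have h2 := LinearMap.toMatrix_mulVec_repr bE bE
        (morseH G 0 : EuclideanSpace ℝ (Fin d) →ₗ[ℝ] EuclideanSpace ℝ (Fin d))
        (hsymm.eigenvectorBasis i)
      have h3 : LinearMap.toMatrix bE bE
        (morseH G 0 : EuclideanSpace ℝ (Fin d) →ₗ[ℝ] EuclideanSpace ℝ (Fin d)) = hessX d f 0 0 :=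
        (hhess 0 0).symm
      rw [h3] at h2
      ext j
      have h4 := congrFun h2 j
      have h5 := congrFun h1 j
      simp only [bE, OrthonormalBasis.coe_toBasis_repr_apply, EuclideanSpace.basisFun_repr] at h4
      exact h4.symm.trans h5)
  have hz : ∀ᶠ p in nhds (0 : EuclideanSpace ℝ (Fin d) × EuclideanSpace ℝ (Fin d)), τ (0, p.2) = 0 :=
    (continuous_snd.tendsto (0 : EuclideanSpace ℝ (Fin d) × EuclideanSpace ℝ (Fin d))).eventually hτ0
  obtain ⟨ε, hε, hball⟩ := Metric.eventually_nhds_iff_ball.1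
    (hτs.and (hz.and (hτu.and hτf)))
  have hmem : ∀ x ∈ Metric.ball (0 : EuclideanSpace ℝ (Fin d)) ε,
      ∀ t ∈ Metric.ball (0 : EuclideanSpace ℝ (Fin d)) ε,
      (x, t) ∈ Metric.ball (0 : EuclideanSpace ℝ (Fin d) × EuclideanSpace ℝ (Fin d)) ε := by
    intro x hx t ht
    simp only [mem_ball_zero_iff, Prod.norm_def, max_lt_iff] at hx ht ⊢
    exact ⟨hx, ht⟩
  have h0 : (0 : EuclideanSpace ℝ (Fin d)) ∈ Metric.ball (0 : EuclideanSpace ℝ (Fin d)) ε :=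
    Metric.mem_ball_self hε
  refine ⟨Metric.ball 0 ε, Metric.ball 0 ε, Metric.isOpen_ball, Metric.isOpen_ball, h0, h0,
    fun p => S (τ p), ?_, ?_, ?_, ?_⟩
  · rintro ⟨x, t⟩ ⟨hx, ht⟩
    have h1 := (hball _ (hmem x hx t ht)).1
    exact (S.contDiff.contDiffAt.comp (x, t) h1).contDiffWithinAt
  · intro t ht
    have h1 : τ (0, t) = 0 := (hball _ (hmem 0 h0 t ht)).2.1
    simp [h1]
  · intro x hx t ht
    obtain ⟨h1, -, h3, -⟩ := hball _ (hmem x hx t ht)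
    have d1 : HasFDerivAt τ (fderiv ℝ τ (x, t)) (x, t) := (h1.differentiableAt (by simp)).hasFDerivAt
    have d2 : HasFDerivAt (fun x' => S (τ (x', t)))
        (S * (fderiv ℝ τ (x, t)).comp (ContinuousLinearMap.inl ℝ _ _)) x :=
      S.hasFDerivAt.comp x (HasFDerivAt.comp (g := τ) x d1 (hasFDerivAt_prodMk_left (𝕜 := ℝ) x t))
    rw [d2.fderiv, ← htoM, LinearMap.det_toMatrix]
    have hu := ((hSu.mul h3).map (ContinuousLinearMap.toLinearMapRingHom
      (R₁ := ℝ) (M₁ := EuclideanSpace ℝ (Fin d)))).map (LinearMap.det (M := EuclideanSpace ℝ (Fin d)) (A := ℝ))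
    exact hu.ne_zero
  · intro x hx t ht
    rw [hSQ]
    exact (hball _ (hmem x hx t ht)).2.2.2
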